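/- Let n ≥ 1 be an integer and let (p,q,r) ∈ ℤ³ with r ≠ 0. Then there exists a smooth curve γ = (x,y,z) : ℝ → ℝ³ such that: (i) γ(t+1) = γ(t) + (p,q,r) for all t ∈ ℝ; (ii) γ is ξ_n-Legendrian, i.e. cos(2πn z(t))·x'(t) + sin(2πn z(t))·y'(t) = 0 for all t; (iii) r·z'(t) > 0 for all t (in particular γ'(t) ≠ 0, so γ is an immersion); and (iv) γ descends to an embedded knot in the 3-torus: for all s,t ∈ ℝ, if γ(s) − γ(t) ∈ ℤ³ then s − t ∈ ℤ. -/

import Mathlib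

open Real

noncomputable section

/-!
Write `w = x + iy` and `e(a) = exp (2πia)`, and take `z(t) = rt`. With `N = nr`, the Legendrian
condition says that `w'(t)` is a real multiple of `i e(Nt)`. For `v = p + iq` the curve with
derivative `v - v̄ e(2Nt)` satisfies it and is displaced by `v` in unit time, but need not be
embedded. Adding a small multiple of `(1 - N) e((1 + N)t) - (1 + N) e((N - 1)t)` repairs this: if
`γ(s) - γ(t)` is a lattice vector then `N(s - t)` is an integer, smallness forces the perturbation
to take equal values at `s` and `t`, and comparing the moduli of its two oscillations gives
`|1 - N| ‖e(s - t) - 1‖ = |1 + N| ‖e(s - t) - 1‖`, hence `e(s - t) = 1`.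
-/

open Complex (I)
open scoped FourierTransform ComplexConjugate

section FourierChar

lemma fourierChar_eq_fourierChar_iff {s t : ℝ} : 𝐞 s = 𝐞 t ↔ ∃ m : ℤ, s - t = m := by
  rw [fourierChar_apply', fourierChar_apply', Circle.exp_eq_exp]
  refine exists_congr fun m ↦ ⟨fun h ↦ ?_, fun h ↦ ?_⟩
  · have h2pi : 2 * π ≠ 0 := two_pi_pos.ne'
    exact mul_left_cancel₀ h2pi (by linear_combination h)
  · linear_combination (2 * π) * h

lemma re_fourierChar (a : ℝ) : (𝐞 a : ℂ).re = cos (2 * π * a) := by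
  rw [fourierChar_apply, Complex.exp_ofReal_mul_I_re]

lemma im_fourierChar (a : ℝ) : (𝐞 a : ℂ).im = sin (2 * π * a) := by
  rw [fourierChar_apply, Complex.exp_ofReal_mul_I_im]

lemma coe_fourierChar_add (a b : ℝ) : (𝐞 (a + b) : ℂ) = 𝐞 a * 𝐞 b := by
  rw [AddChar.map_add_eq_mul, Circle.coe_mul]

lemma coe_fourierChar_neg (a : ℝ) : (𝐞 (-a) : ℂ) = conj (𝐞 a : ℂ) := by
  rw [AddChar.map_neg_eq_inv, Circle.coe_inv_eq_conj]

lemma norm_fourierChar_sub_fourierChar (s t : ℝ) :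
    ‖(𝐞 s : ℂ) - 𝐞 t‖ = ‖(𝐞 (s - t) : ℂ) - 1‖ := by
  calc ‖(𝐞 s : ℂ) - 𝐞 t‖ = ‖((𝐞 (s - t) : ℂ) - 1) * 𝐞 t‖ := by
        rw [sub_mul, one_mul, ← coe_fourierChar_add, sub_add_cancel]
    _ = ‖(𝐞 (s - t) : ℂ) - 1‖ := by rw [norm_mul, Circle.norm_coe, mul_one]

lemma norm_fourierChar_neg_sub_one (a : ℝ) : ‖(𝐞 (-a) : ℂ) - 1‖ = ‖(𝐞 a : ℂ) - 1‖ := by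
  rw [coe_fourierChar_neg, ← Complex.norm_conj, map_sub, Complex.conj_conj, map_one]

lemma contDiff_fourierChar_const_mul {k : WithTop ℕ∞} (a : ℝ) :
    ContDiff ℝ k fun t : ℝ ↦ (𝐞 (a * t) : ℂ) := by
  have phase_smooth : ContDiff ℝ k fun t : ℝ ↦ 2 * π * (a * t) := by fun_prop
  simp only [fourierChar_apply]
  exact ((Complex.ofRealCLM.contDiff.comp phase_smooth).mul contDiff_const).cexp

lemma hasDerivAt_fourierChar_const_mul (a t : ℝ) :
    HasDerivAt (fun u : ℝ ↦ (𝐞 (a * u) : ℂ)) (2 * π * I * a * 𝐞 (a * t)) t := by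
  refine ((hasDerivAt_fourierChar (a * t)).scomp t (hasDerivAt_const_mul a)).congr_deriv ?_
  rw [Complex.real_smul]
  ring

end FourierChar

lemma gaussianInt_eq_zero_of_norm_lt_one {g : GaussianInt} (hg : ‖(g : ℂ)‖ < 1) : g = 0 := by
  have norm_lt_one : (g.norm : ℝ) < 1 := by
    rw [GaussianInt.intCast_real_norm, Complex.normSq_eq_norm_sq]
    exact pow_lt_one₀ (norm_nonneg _) hg two_ne_zero
  exact GaussianInt.norm_eq_zero.mp
    (le_antisymm (Int.lt_add_one_iff.mp (by exact_mod_cast norm_lt_one)) g.norm_nonneg)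

/-- For `N ≠ 0`, the plane curve with derivative `v - v̄ e(2Nt)`: a Legendrian projection whose
displacement in unit time is `v` when `N` is an integer. -/
def driftCurve (N : ℝ) (v : ℂ) (t : ℝ) : ℂ :=
  v * t - conj v / (4 * π * I * N) * 𝐞 (2 * N * t)

/-- The plane curve with derivative `4π(1 - N²) cos (2πt) i e(Nt)`, used as the perturbation that
separates self-intersections. For `N = ±1` it is constant, and then no separation is needed. -/
def rippleCurve (N t : ℝ) : ℂ :=
  (1 - N) * 𝐞 ((1 + N) * t) - (1 + N) * 𝐞 ((N - 1) * t)

/-- The projection `x + iy` of the Legendrian curve to the plane, with perturbation of size `ε`. -/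
def planeCurve (N : ℝ) (v : ℂ) (ε t : ℝ) : ℂ :=
  driftCurve N v t + ε * rippleCurve N t

section PlaneCurves

variable {N : ℝ} {s t : ℝ}

lemma hasDerivAt_driftCurve (hN : N ≠ 0) (v : ℂ) (t : ℝ) :
    HasDerivAt (driftCurve N v) ((2 * (v * conj (𝐞 (N * t) : ℂ)).im : ℝ) * (I * 𝐞 (N * t))) t := by
  have hasDerivAt_sub_conj : HasDerivAt (driftCurve N v) (v - conj v * 𝐞 (2 * N * t)) t := by
    refine ((Complex.ofRealCLM.hasDerivAt.const_mul v).sub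
      ((hasDerivAt_fourierChar_const_mul (2 * N) t).const_mul _)).congr_deriv ?_
    have hN' : (N : ℂ) ≠ 0 := Complex.ofReal_ne_zero.mpr hN
    have hpi : (π : ℂ) ≠ 0 := Complex.ofReal_ne_zero.mpr pi_ne_zero
    simp only [Complex.ofRealCLM_apply, Complex.ofReal_one, Complex.ofReal_mul,
      Complex.ofReal_ofNat]
    field_simp
    ring
  refine hasDerivAt_sub_conj.congr_deriv ?_
  have two_im : ((2 * (v * conj (𝐞 (N * t) : ℂ)).im : ℝ) : ℂ) * I =
      v * conj (𝐞 (N * t) : ℂ) - conj v * 𝐞 (N * t) := by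
    simpa using (Complex.sub_conj (v * conj (𝐞 (N * t) : ℂ))).symm
  have conj_mul_self : conj (𝐞 (N * t) : ℂ) * 𝐞 (N * t) = 1 := by
    rw [← coe_fourierChar_neg, ← coe_fourierChar_add, neg_add_cancel, AddChar.map_zero_eq_one,
      Circle.coe_one]
  rw [show 2 * N * t = N * t + N * t by ring, coe_fourierChar_add]
  linear_combination -v * conj_mul_self - (𝐞 (N * t) : ℂ) * two_im

lemma hasDerivAt_rippleCurve (N t : ℝ) :
    HasDerivAt (rippleCurve N)
      ((4 * π * (1 - N ^ 2) * cos (2 * π * t) : ℝ) * (I * 𝐞 (N * t))) t := by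
  refine (((hasDerivAt_fourierChar_const_mul (1 + N) t).const_mul (1 - N : ℂ)).sub
    ((hasDerivAt_fourierChar_const_mul (N - 1) t).const_mul (1 + N : ℂ))).congr_deriv ?_
  have two_cos : (𝐞 t : ℂ) + conj (𝐞 t : ℂ) = 2 * (cos (2 * π * t) : ℝ) := by
    rw [Complex.add_conj, re_fourierChar]
    push_cast
    rfl
  rw [show (1 + N) * t = t + N * t by ring, show (N - 1) * t = -t + N * t by ring,
    coe_fourierChar_add, coe_fourierChar_add, coe_fourierChar_neg]
  simp only [Complex.ofReal_mul, Complex.ofReal_sub, Complex.ofReal_add, Complex.ofReal_pow,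
    Complex.ofReal_one, Complex.ofReal_ofNat]
  linear_combination (2 * π * I * (1 - N ^ 2) * 𝐞 (N * t)) * two_cos

lemma exists_hasDerivAt_planeCurve (hN : N ≠ 0) (v : ℂ) (ε t : ℝ) :
    ∃ f : ℝ, HasDerivAt (planeCurve N v ε) (f * (I * 𝐞 (N * t))) t := by
  have h := (hasDerivAt_driftCurve hN v t).add ((hasDerivAt_rippleCurve N t).const_mul (ε : ℂ))
  rw [← mul_assoc (ε : ℂ), ← add_mul, ← Complex.ofReal_mul, ← Complex.ofReal_add] at h
  exact ⟨_, h⟩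

lemma contDiff_planeCurve {k : WithTop ℕ∞} (N : ℝ) (v : ℂ) (ε : ℝ) :
    ContDiff ℝ k (planeCurve N v ε) := by
  have hdrift : ContDiff ℝ k (driftCurve N v) :=
    (contDiff_const.mul Complex.ofRealCLM.contDiff).sub
      (contDiff_const.mul (contDiff_fourierChar_const_mul _))
  have hripple : ContDiff ℝ k (rippleCurve N) :=
    (contDiff_const.mul (contDiff_fourierChar_const_mul _)).sub
      (contDiff_const.mul (contDiff_fourierChar_const_mul _))
  exact hdrift.add (contDiff_const.mul hripple)

lemma driftCurve_sub (v : ℂ) {k : ℤ} (hk : N * (s - t) = k) :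
    driftCurve N v s - driftCurve N v t = v * (s - t) := by
  have wave_eq : 𝐞 (2 * N * s) = 𝐞 (2 * N * t) :=
    fourierChar_eq_fourierChar_iff.mpr ⟨2 * k, by push_cast; linear_combination 2 * hk⟩
  rw [driftCurve, driftCurve, wave_eq]
  ring

lemma rippleCurve_periodic (N : ℤ) : Function.Periodic (rippleCurve N) 1 := by
  intro t
  have wave_eq (a : ℤ) : 𝐞 (a * (t + 1)) = 𝐞 (a * t) :=
    fourierChar_eq_fourierChar_iff.mpr ⟨a, by ring⟩
  have upper := wave_eq (1 + N)
  have lower := wave_eq (N - 1)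
  push_cast at upper lower
  rw [rippleCurve, rippleCurve, upper, lower]

lemma exists_int_sub_eq_of_rippleCurve_eq (hN : N ≠ 0) {k : ℤ} (hk : N * (s - t) = k)
    (h : rippleCurve N s = rippleCurve N t) : ∃ m : ℤ, s - t = m := by
  have upper : ‖(𝐞 ((1 + N) * s) : ℂ) - 𝐞 ((1 + N) * t)‖ = ‖(𝐞 (s - t) : ℂ) - 1‖ := by
    have : 𝐞 ((1 + N) * s - (1 + N) * t) = 𝐞 (s - t) :=
      fourierChar_eq_fourierChar_iff.mpr ⟨k, by linear_combination hk⟩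
    rw [norm_fourierChar_sub_fourierChar, this]
  have lower : ‖(𝐞 ((N - 1) * s) : ℂ) - 𝐞 ((N - 1) * t)‖ = ‖(𝐞 (s - t) : ℂ) - 1‖ := by
    have : 𝐞 ((N - 1) * s - (N - 1) * t) = 𝐞 (-(s - t)) :=
      fourierChar_eq_fourierChar_iff.mpr ⟨k, by linear_combination hk⟩
    rw [norm_fourierChar_sub_fourierChar, this, norm_fourierChar_neg_sub_one]
  have oscillations_eq : ((1 - N : ℝ) : ℂ) * (𝐞 ((1 + N) * s) - 𝐞 ((1 + N) * t)) =
      ((1 + N : ℝ) : ℂ) * (𝐞 ((N - 1) * s) - 𝐞 ((N - 1) * t)) := by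
    rw [rippleCurve, rippleCurve] at h
    push_cast
    linear_combination h
  have moduli_eq : |1 - N| * ‖(𝐞 (s - t) : ℂ) - 1‖ = |1 + N| * ‖(𝐞 (s - t) : ℂ) - 1‖ := by
    simpa only [norm_mul, Complex.norm_real, norm_eq_abs, upper, lower] using
      congrArg norm oscillations_eq
  have amplitudes_ne : |1 - N| ≠ |1 + N| := fun habs ↦
    hN (by linear_combination -(1 / 4) * (sq_eq_sq_iff_abs_eq_abs _ _).mpr habs)
  have wave_eq_one : (𝐞 (s - t) : ℂ) = 1 :=
    sub_eq_zero.mp <| norm_eq_zero.mp <|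
      (mul_eq_mul_right_iff.mp moduli_eq).resolve_left amplitudes_ne
  have wave_eq_wave_zero : 𝐞 (s - t) = 𝐞 0 := by
    rw [AddChar.map_zero_eq_one]
    exact Circle.coe_eq_one.mp wave_eq_one
  simpa only [sub_zero] using fourierChar_eq_fourierChar_iff.mp wave_eq_wave_zero

lemma norm_rippleCurve_sub_le (N s t : ℝ) :
    ‖rippleCurve N s - rippleCurve N t‖ ≤ 2 * (|1 - N| + |1 + N|) := by
  have norm_le (u : ℝ) : ‖rippleCurve N u‖ ≤ |1 - N| + |1 + N| := by
    refine (norm_sub_le _ _).trans_eq ?_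
    rw [norm_mul, norm_mul, Circle.norm_coe, Circle.norm_coe, mul_one, mul_one]
    norm_cast
  linarith [norm_sub_le (rippleCurve N s) (rippleCurve N t), norm_le s, norm_le t]

lemma planeCurve_add_one (N : ℤ) (v : ℂ) (ε t : ℝ) :
    planeCurve N v ε (t + 1) = planeCurve N v ε t + v := by
  have hk : (N : ℝ) * (t + 1 - t) = N := by ring
  have drift_sub := driftCurve_sub v hk
  push_cast at drift_sub
  rw [planeCurve, planeCurve, rippleCurve_periodic]
  linear_combination drift_sub

lemma exists_int_sub_eq_of_planeCurve_sub_eq (hN : N ≠ 0) {k : ℤ} (hk : N * (s - t) = k)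
    {r c : ℤ} (hr : r ≠ 0) (hc : r * (s - t) = c) {ε : ℝ} (hε : 0 < ε)
    (hsmall : |(r : ℝ)| * (2 * (|1 - N| + |1 + N|)) * ε < 1) {v g : GaussianInt}
    (hg : planeCurve N v ε s - planeCurve N v ε t = g) : ∃ m : ℤ, s - t = m := by
  have lattice_eq : ((r * g - c * v : GaussianInt) : ℂ) =
      (r * ε : ℝ) * (rippleCurve N s - rippleCurve N t) := by
    have hc' : (r : ℂ) * (s - t) = c := by exact_mod_cast hc
    rw [planeCurve, planeCurve] at hg
    simp only [map_sub, map_mul, map_intCast, Complex.ofReal_mul, Complex.ofReal_intCast]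
    linear_combination -r * hg + r * driftCurve_sub (v : ℂ) hk + v * hc'
  have lattice_lt : ‖((r * g - c * v : GaussianInt) : ℂ)‖ < 1 := by
    calc ‖((r * g - c * v : GaussianInt) : ℂ)‖
        = |(r : ℝ)| * ‖rippleCurve N s - rippleCurve N t‖ * ε := by
          rw [lattice_eq, norm_mul, Complex.norm_real, norm_eq_abs, abs_mul, abs_of_pos hε]
          ring
      _ ≤ |(r : ℝ)| * (2 * (|1 - N| + |1 + N|)) * ε := by
          gcongr
          exact norm_rippleCurve_sub_le N s t
      _ < 1 := hsmall
  have ripple_eq : rippleCurve N s = rippleCurve N t := by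
    rw [gaussianInt_eq_zero_of_norm_lt_one lattice_lt, map_zero] at lattice_eq
    have scale_ne : ((r * ε : ℝ) : ℂ) ≠ 0 :=
      Complex.ofReal_ne_zero.mpr (mul_ne_zero (Int.cast_ne_zero.mpr hr) hε.ne')
    exact sub_eq_zero.mp ((mul_eq_zero.mp lattice_eq.symm).resolve_left scale_ne)
  exact exists_int_sub_eq_of_rippleCurve_eq hN hk ripple_eq

end PlaneCurves

lemma cos_mul_deriv_re_add_sin_mul_deriv_im {w : ℝ → ℂ} {a f t : ℝ}
    (hw : HasDerivAt w (f * (I * 𝐞 a)) t) :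
    cos (2 * π * a) * deriv (fun u ↦ (w u).re) t +
      sin (2 * π * a) * deriv (fun u ↦ (w u).im) t = 0 := by
  have hre : HasDerivAt (fun u ↦ (w u).re) (f * (I * 𝐞 a)).re t :=
    Complex.reCLM.hasFDerivAt.comp_hasDerivAt t hw
  have him : HasDerivAt (fun u ↦ (w u).im) (f * (I * 𝐞 a)).im t :=
    Complex.imCLM.hasFDerivAt.comp_hasDerivAt t hw
  rw [hre.deriv, him.deriv, Complex.re_ofReal_mul, Complex.im_ofReal_mul, Complex.I_mul_re,
    Complex.I_mul_im, re_fourierChar, im_fourierChar]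
  ring

/-- For every `n ≥ 1` and `(p,q,r) ∈ ℤ³` with `r ≠ 0`, there is a smooth
`(p,q,r)`-periodic `ξ_n`-Legendrian curve `γ = (x,y,z) : ℝ → ℝ³` with `r·z'(t) > 0`
everywhere, descending to an embedded knot in the 3-torus. -/
theorem exists_periodic_legendrian_knot (n : ℕ) (hn : 1 ≤ n) (p q r : ℤ) (hr : r ≠ 0) :
    ∃ x y z : ℝ → ℝ,
      ContDiff ℝ (⊤ : ℕ∞) x ∧ ContDiff ℝ (⊤ : ℕ∞) y ∧ ContDiff ℝ (⊤ : ℕ∞) z ∧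
      (∀ t : ℝ, x (t + 1) = x t + p ∧ y (t + 1) = y t + q ∧ z (t + 1) = z t + r) ∧
      (∀ t : ℝ, Real.cos (2 * π * n * z t) * deriv x t
        + Real.sin (2 * π * n * z t) * deriv y t = 0) ∧
      (∀ t : ℝ, (r : ℝ) * deriv z t > 0) ∧
      (∀ s t : ℝ,
        ((∃ a : ℤ, x s - x t = a) ∧ (∃ b : ℤ, y s - y t = b) ∧ (∃ c : ℤ, z s - z t = c)) →
        ∃ k : ℤ, s - t = k) := by
  let N : ℤ := n * r
  have hN : (N : ℝ) ≠ 0 := Int.cast_ne_zero.mpr (mul_ne_zero (by omega) hr)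
  have N_mul (a : ℝ) : (N : ℝ) * a = n * (r * a) := by simp only [N]; push_cast; ring
  obtain ⟨ε, hε, hsmall⟩ :=
    exists_pos_mul_lt one_pos (|(r : ℝ)| * (2 * (|1 - (N : ℝ)| + |1 + (N : ℝ)|)))
  let v : GaussianInt := ⟨p, q⟩
  let w : ℝ → ℂ := planeCurve N v ε
  have w_smooth : ContDiff ℝ (⊤ : ℕ∞) w := contDiff_planeCurve _ _ _
  have w_add_one (t : ℝ) : w (t + 1) = w t + v := planeCurve_add_one _ _ _ _
  refine ⟨fun t ↦ (w t).re, fun t ↦ (w t).im, fun t ↦ r * t, Complex.reCLM.contDiff.comp w_smooth,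
    Complex.imCLM.contDiff.comp w_smooth, by fun_prop, fun t ↦ ?_, fun t ↦ ?_, fun t ↦ ?_, ?_⟩
  · exact ⟨by simp [w_add_one, v], by simp [w_add_one, v], by ring⟩
  · obtain ⟨f, hf⟩ := exists_hasDerivAt_planeCurve hN v ε t
    simpa only [N_mul, ← mul_assoc] using cos_mul_deriv_re_add_sin_mul_deriv_im hf
  · simpa only [deriv_const_mul_id'] using mul_self_pos.mpr (Int.cast_ne_zero.mpr hr)
  · rintro s t ⟨⟨a, ha⟩, ⟨b, hb⟩, ⟨c, hc⟩⟩
    rw [← mul_sub] at hc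
    have hk : (N : ℝ) * (s - t) = (n * c : ℤ) := by rw [N_mul, hc]; norm_cast
    have hg : w s - w t = (⟨a, b⟩ : GaussianInt) :=
      Complex.ext (by simpa using ha) (by simpa using hb)
    exact exists_int_sub_eq_of_planeCurve_sub_eq hN hk hr hc hε hsmall hg
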